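/- Let p < q be primes, 0 ≤ j < p, and let I be any subset of {0, 1, ..., q-1}. Then the polynomial Σ_{i∈I} (x^{j+ip} mod Φ_{pq}(x)) has all coefficients in {-1, 0, 1}. -/

import Mathlib

open Polynomial Finset

theorem aux_fw (N : ℕ) : ∀ (p q : ℕ) (S : ℕ → Prop), p + q ≤ N → Nat.Coprime p q →
    (∀ t, t + p + 1 < p + q → (S t ↔ S (t + p))) →
    (∀ t, t + q + 1 < p + q → (S t ↔ S (t + q))) →
    ∀ s t, s + 1 < p + q → t + 1 < p + q → (S s ↔ S t) := by
  induction N with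
  | zero => intro p q S h _ _ _ s t hs; omega
  | succ N ih =>
    have key : ∀ (p q : ℕ) (S : ℕ → Prop), p ≤ q → p + q ≤ N + 1 → Nat.Coprime p q →
      (∀ t, t + p + 1 < p + q → (S t ↔ S (t + p))) →
      (∀ t, t + q + 1 < p + q → (S t ↔ S (t + q))) →
      ∀ s t, s + 1 < p + q → t + 1 < p + q → (S s ↔ S t) := by
      intro p q S hle hN hc h1 h2 s t hs ht
      rcases Nat.eq_zero_or_pos p with rfl | hp
      · simp at hc; omega
      obtain ⟨d, rfl⟩ := Nat.exists_eq_add_of_le hle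
      have hc' : Nat.Coprime p d := by simpa using hc
      have pre := ih p d S (by omega) hc' (fun t ht => h1 t (by omega)) (fun t ht => by
        rw [h2 t (by omega), h1 (t + d) (by omega)]
        have : t + (p + d) = t + d + p := by omega
        rw [this])
      by_cases hd : d = 0
      · subst hd
        have : p = 1 := by simpa using hc'
        subst this
        obtain rfl : s = t := by omega
        exact Iff.rfl
      have red : ∀ t, t + 1 < p + (p + d) → ∃ t', t' + 1 < p + d ∧ (S t ↔ S t') := by
        intro t ht
        by_cases h : t + 1 < p + d
        · exact ⟨t, h, Iff.rfl⟩
        · refine ⟨t - p, by omega, ?_⟩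
          rw [h1 (t - p) (by omega), Nat.sub_add_cancel (by omega)]
      obtain ⟨s', hs1, hs2⟩ := red s hs
      obtain ⟨t', ht1, ht2⟩ := red t ht
      rw [hs2, ht2]
      exact pre s' t' hs1 ht1
    intro p q S hN hc h1 h2 s t hs ht
    rcases le_total p q with h | h
    · exact key p q S h hN hc h1 h2 s t hs ht
    · exact key q p S h (by omega) hc.symm (fun t ht => h2 t (by omega))
        (fun t ht => h1 t (by omega)) s t (by omega) (by omega)

theorem aux_coprime (N : ℕ) : ∀ (p q : ℕ), p + q ≤ N → Nat.Coprime p q →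
    IsCoprime (∑ i ∈ range p, (X : ℤ[X]) ^ i) (∑ i ∈ range q, (X : ℤ[X]) ^ i) := by
  induction N with
  | zero =>
    intro p q h hc
    obtain rfl : p = 0 := by omega
    obtain rfl : q = 0 := by omega
    simp at hc
  | succ N ih =>
    have key : ∀ (p q : ℕ), p ≤ q → p + q ≤ N + 1 → Nat.Coprime p q →
      IsCoprime (∑ i ∈ range p, (X : ℤ[X]) ^ i) (∑ i ∈ range q, (X : ℤ[X]) ^ i) := by
      intro p q hle hN hc
      rcases Nat.eq_zero_or_pos p with rfl | hp
      · obtain rfl : q = 1 := by simpa using hc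
        simp [isCoprime_one_right]
      obtain ⟨d, rfl⟩ := Nat.exists_eq_add_of_le hle
      have hc' : Nat.Coprime p d := by simpa using hc
      have h1 := ih p d (by omega) hc'
      have hX : IsCoprime (∑ i ∈ range p, (X : ℤ[X]) ^ i) (X ^ p) := by
        apply IsCoprime.pow_right
        obtain ⟨k, rfl⟩ : ∃ k, p = k + 1 := ⟨p - 1, by omega⟩
        rw [Finset.sum_range_succ']
        refine ⟨1, -(∑ i ∈ range k, (X : ℤ[X]) ^ i), ?_⟩
        simp only [pow_succ, ← Finset.sum_mul]
        ring
      have h2 := hX.mul_right h1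
      rw [Finset.sum_range_add]
      simp only [pow_add, ← Finset.mul_sum]
      have := h2.add_mul_left_right 1
      rwa [mul_one, add_comm] at this
    intro p q hN hc
    rcases le_total p q with h | h
    · exact key p q h hN hc
    · exact (key q p h (by omega) hc.symm).symm

theorem aux_coeff (A : ℤ[X]) (p q n : ℕ) (hp : 0 < p) (hA : A.degree < p) (hn : n < p * q) :
    (A * ∑ k ∈ range q, (X : ℤ[X]) ^ (p * k)).coeff n = A.coeff (n % p) := by
  rw [Finset.mul_sum, finsetSum_coeff, Finset.sum_eq_single (n / p)]
  · rw [coeff_mul_X_pow', if_pos (Nat.mul_div_le n p)]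
    congr 1
    have := Nat.mod_add_div n p
    omega
  · intro k _ hk
    rw [coeff_mul_X_pow']
    split_ifs with h
    · apply coeff_eq_zero_of_degree_lt
      refine lt_of_lt_of_le hA ?_
      have : p ≤ n - p * k := by
        by_contra hlt
        apply hk
        symm
        apply Nat.div_eq_of_lt_le
        · rw [mul_comm]; exact h
        · rw [add_mul, mul_comm]; omega
      exact_mod_cast this
    · rfl
  · intro h
    exact absurd (Finset.mem_range.2 (Nat.div_lt_of_lt_mul hn)) h

theorem aux_deg (A : ℤ[X]) (p q : ℕ) (hp : 0 < p) (hq : 0 < q) (hA : A.degree < p) :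
    (A * ∑ k ∈ range q, (X : ℤ[X]) ^ (p * k)).degree < (p * q : ℕ) := by
  rw [degree_lt_iff_coeff_zero]
  intro m hm
  rw [Finset.mul_sum, finsetSum_coeff]
  apply Finset.sum_eq_zero
  intro k hk
  rw [Finset.mem_range] at hk
  rw [coeff_mul_X_pow']
  split_ifs with h
  · apply coeff_eq_zero_of_degree_lt
    refine lt_of_lt_of_le hA ?_
    have : p ≤ m - p * k := by
      have : p * (k + 1) ≤ p * q := Nat.mul_le_mul_left _ hk
      rw [mul_add] at this
      omega
    exact_mod_cast this
  · rfl

theorem aux_geom (p q : ℕ) :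
    (X ^ p - 1 : ℤ[X]) * ∑ k ∈ range q, (X : ℤ[X]) ^ (p * k) = X ^ (p * q) - 1 := by
  simp only [pow_mul]
  rw [mul_comm, geom_sum_mul]

theorem aux_expand (p q : ℕ) (hp : p.Prime) (hq : q.Prime) (hne : p ≠ q) :
    ∑ k ∈ range q, (X : ℤ[X]) ^ (p * k) =
      cyclotomic (p * q) ℤ * ∑ k ∈ range q, (X : ℤ[X]) ^ k := by
  have h := cyclotomic_expand_eq_cyclotomic_mul (p := p) (n := q) hp
    (fun h => hne ((Nat.prime_dvd_prime_iff_eq hp hq).1 h)) ℤ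
  haveI := Fact.mk hq
  rw [cyclotomic_prime] at h
  rw [mul_comm p q, ← h]
  simp [pow_mul]

theorem aux_decomp (p q : ℕ) (hp : p.Prime) (hq : q.Prime) (hne : p ≠ q) (D : ℤ[X])
    (hD : D.degree < (p * q : ℕ)) (hdvd : cyclotomic (p * q) ℤ ∣ D) :
    ∃ a b : ℕ → ℤ, ∀ n < p * q, D.coeff n = a (n % p) + b (n % q) := by
  obtain ⟨U, V, hUV⟩ := aux_coprime _ p q le_rfl ((Nat.coprime_primes hp hq).2 hne)
  obtain ⟨h, rfl⟩ := hdvd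
  set G := ∑ k ∈ range q, (X : ℤ[X]) ^ (p * k) with hG
  set H := ∑ k ∈ range p, (X : ℤ[X]) ^ (q * k) with hH
  have e1 := aux_expand p q hp hq hne
  have e2 := aux_expand q p hq hp hne.symm
  rw [mul_comm q p] at e2
  have g1 := aux_geom p q
  have g2 := aux_geom q p
  rw [mul_comm q p] at g2
  rw [← hG] at e1 g1
  rw [← hH] at e2 g2
  have m1 : (X ^ p - 1 : ℤ[X]).Monic := monic_X_pow_sub_C 1 hp.ne_zero
  have m2 : (X ^ q - 1 : ℤ[X]).Monic := monic_X_pow_sub_C 1 hq.ne_zero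
  have m3 : (X ^ (p * q) - 1 : ℤ[X]).Monic :=
    monic_X_pow_sub_C 1 (Nat.mul_ne_zero hp.ne_zero hq.ne_zero)
  have d1 : (X ^ p - 1 : ℤ[X]).degree = p := degree_X_pow_sub_C hp.pos 1
  have d2 : (X ^ q - 1 : ℤ[X]).degree = q := degree_X_pow_sub_C hq.pos 1
  have d3 : (X ^ (p * q) - 1 : ℤ[X]).degree = (p * q : ℕ) :=
    degree_X_pow_sub_C (Nat.mul_pos hp.pos hq.pos) 1
  set A := (h * V) %ₘ (X ^ p - 1) with hA
  set B := (h * U) %ₘ (X ^ q - 1) with hB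
  have dA : A.degree < p := d1 ▸ degree_modByMonic_lt _ m1
  have dB : B.degree < q := d2 ▸ degree_modByMonic_lt _ m2
  have EA := modByMonic_add_div (h * V) (X ^ p - 1 : ℤ[X])
  have EB := modByMonic_add_div (h * U) (X ^ q - 1 : ℤ[X])
  rw [← hA] at EA
  rw [← hB] at EB
  have eq1 : cyclotomic (p * q) ℤ * h = (A * G + B * H) +
      (X ^ (p * q) - 1) * ((h * V) /ₘ (X ^ p - 1) + (h * U) /ₘ (X ^ q - 1)) := by
    have : cyclotomic (p * q) ℤ * h = (h * V) * G + (h * U) * H := by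
      rw [e1, e2]
      linear_combination (-(cyclotomic (p * q) ℤ) * h) * hUV
    rw [this]
    linear_combination (-G) * EA - H * EB + ((h * V) /ₘ (X ^ p - 1)) * g1
      + ((h * U) /ₘ (X ^ q - 1)) * g2
  have dAG : (A * G).degree < (p * q : ℕ) := aux_deg A p q hp.pos hq.pos dA
  have dBH : (B * H).degree < (p * q : ℕ) := by
    rw [mul_comm p q]; exact aux_deg B q p hq.pos hp.pos dB
  have eq2 : cyclotomic (p * q) ℤ * h = A * G + B * H := by
    have u1 : (cyclotomic (p * q) ℤ * h) %ₘ (X ^ (p * q) - 1) = cyclotomic (p * q) ℤ * h :=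
      (modByMonic_eq_self_iff m3).2 (d3 ▸ hD)
    have u2 : (A * G + B * H) %ₘ (X ^ (p * q) - 1) = A * G + B * H :=
      (modByMonic_eq_self_iff m3).2 (d3 ▸ lt_of_le_of_lt (degree_add_le _ _) (max_lt dAG dBH))
    rw [← u1, eq1, add_modByMonic, u2, (modByMonic_eq_zero_iff_dvd m3).2 (dvd_mul_right _ _),
      add_zero]
  refine ⟨A.coeff, B.coeff, fun n hn => ?_⟩
  rw [eq2, coeff_add, aux_coeff A p q n hp.pos dA hn,
    aux_coeff B q p n hq.pos dB (by rwa [mul_comm])]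

theorem aux_mod (p n L : ℕ) (hp : 0 < p) : ∃ s < p, (L + s) % p = n % p := by
  refine ⟨((p - 1) * L + n) % p, Nat.mod_lt _ hp, ?_⟩
  rw [Nat.add_mod_mod]
  obtain ⟨k, rfl⟩ : ∃ k, p = k + 1 := ⟨p - 1, by omega⟩
  have : L + ((k + 1 - 1) * L + n) = n + (k + 1) * L := by simp; ring
  rw [this, Nat.add_mul_mod_self_left]

theorem subset_sum_coeff_le_one (p q j : ℕ) (hp : p.Prime) (hq : q.Prime)
    (hpq : p < q) (hj : j < p) (I : Finset ℕ) (hI : I ⊆ Finset.range q) :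
    ∀ n, |(∑ i ∈ I, X ^ (j + i * p) %ₘ cyclotomic (p * q) ℤ).coeff n| ≤ 1 := by
  intro n
  have hΦ := cyclotomic.monic (p * q) ℤ
  have hc : Nat.Coprime p q := (Nat.coprime_primes hp hq).2 hpq.ne
  set r := ∑ i ∈ I, (X : ℤ[X]) ^ (j + i * p) %ₘ cyclotomic (p * q) ℤ with hr
  set g := ∑ i ∈ I, (X : ℤ[X]) ^ (j + i * p) with hg
  have hrg : r = g %ₘ cyclotomic (p * q) ℤ := by
    rw [hr, hg]
    exact (map_sum (modByMonicHom (cyclotomic (p * q) ℤ)) _ _).symm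
  have hdeg : (cyclotomic (p * q) ℤ).degree = ((p - 1) * (q - 1) : ℕ) := by
    rw [degree_cyclotomic, Nat.totient_mul hc, Nat.totient_prime hp, Nat.totient_prime hq]
  obtain ⟨L, hL⟩ : ∃ L, L = (p - 1) * (q - 1) := ⟨_, rfl⟩
  rw [← hL] at hdeg
  have hLpq : L + (p + q - 1) = p * q := by
    obtain ⟨a, rfl⟩ : ∃ k, p = k + 1 := ⟨p - 1, by have := hp.pos; omega⟩
    obtain ⟨b, rfl⟩ : ∃ k, q = k + 1 := ⟨q - 1, by have := hq.pos; omega⟩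
    have : a + 1 + (b + 1) - 1 = a + b + 1 := by omega
    rw [hL, this]; simp; ring
  have rdeg : r.degree < L := by rw [hrg, ← hdeg]; exact degree_modByMonic_lt _ hΦ
  have r0 : ∀ m, L ≤ m → r.coeff m = 0 := (degree_lt_iff_coeff_zero _ _).1 rdeg
  have gcoeff : ∀ m, g.coeff m = if m ∈ I.image (fun i => j + i * p) then 1 else 0 := by
    intro m
    rw [hg, ← Finset.sum_image (f := fun k => (X : ℤ[X]) ^ k) (g := fun i => j + i * p)]
    · simp [finsetSum_coeff, coeff_X_pow]
    · intro x _ y _ hxy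
      have := hp.pos
      simpa [hp.ne_zero] using hxy
  have g01 : ∀ m, g.coeff m = 0 ∨ g.coeff m = 1 := by
    intro m; rw [gcoeff]; split_ifs <;> simp
  have gj : ∀ m, m % p ≠ j → g.coeff m = 0 := by
    intro m hm
    rw [gcoeff, if_neg]
    intro h
    obtain ⟨i, -, rfl⟩ := Finset.mem_image.1 h
    apply hm
    rw [Nat.add_mul_mod_self_right, Nat.mod_eq_of_lt hj]
  have gdeg : g.degree < (p * q : ℕ) := by
    rw [degree_lt_iff_coeff_zero]
    intro m hm
    rw [gcoeff, if_neg]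
    intro h
    obtain ⟨i, hi, rfl⟩ := Finset.mem_image.1 h
    have hi' := Finset.mem_range.1 (hI hi)
    have : (i + 1) * p ≤ q * p := Nat.mul_le_mul_right _ hi'
    rw [add_mul, mul_comm q p] at this
    omega
  obtain ⟨a, b, hab⟩ := aux_decomp p q hp hq hpq.ne (g - r)
    (lt_of_le_of_lt (degree_sub_le _ _) (max_lt gdeg (lt_of_lt_of_le rdeg (by
      exact_mod_cast (by omega : L ≤ p * q)))))
    (by
      rw [hrg, modByMonic_eq_sub_mul_div]
      simp)
  simp only [coeff_sub] at hab
  have hAB : ∀ m, L ≤ m → m < p * q →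
      ((m % p = j ∨ a (m % p) - a j = 0 ∨ a (m % p) - a j = -1) ↔
        (b (m % q) + a j = 0 ∨ b (m % q) + a j = 1)) := by
    intro m h1 h2
    have h3 := hab m h2
    rw [r0 m h1] at h3
    by_cases hm : m % p = j
    · have := g01 m
      rw [hm] at h3
      constructor
      · intro _; omega
      · intro _; exact Or.inl hm
    · rw [gj m hm] at h3
      constructor
      · rintro (h | h | h) <;> omega
      · intro h; right; omega
  have hfw := aux_fw _ p q
    (fun t => b ((L + t) % q) + a j = 0 ∨ b ((L + t) % q) + a j = 1) le_rfl hc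
    (fun t ht => by
      rw [← hAB (L + t) (by omega) (by omega), ← hAB (L + (t + p)) (by omega) (by omega),
        ← add_assoc, Nat.add_mod_right])
    (fun t ht => by
      rw [← add_assoc, Nat.add_mod_right])
  have hp2 := hp.two_le
  have hall : ∀ t, t + 1 < p + q →
      (b ((L + t) % q) + a j = 0 ∨ b ((L + t) % q) + a j = 1) := by
    intro t ht
    obtain ⟨s, hs, hs'⟩ := aux_mod p j L hp.pos
    rw [Nat.mod_eq_of_lt hj] at hs'
    exact (hfw s t (by omega) ht).1 ((hAB (L + s) (by omega) (by omega)).1 (Or.inl hs'))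
  by_cases hn : n < L
  · obtain ⟨s, hs, hs'⟩ := aux_mod p n L hp.pos
    obtain ⟨t, ht, ht'⟩ := aux_mod q n L hq.pos
    have k1 := hall t (by omega)
    have k2 := (hAB (L + s) (by omega) (by omega)).2 (hall s (by omega))
    rw [ht'] at k1
    rw [hs'] at k2
    have h3 := hab n (by omega)
    have h4 := g01 n
    rw [abs_le]
    by_cases hm : n % p = j
    · rw [hm] at h3
      omega
    · have := gj n hm
      omega
  · rw [r0 n (by omega)]; simp
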